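/- Excited energy is attained by a central configuration: let α > 2 and ω > 0. The infimum E*(ω) = inf{E_ω(x) : K_ω(x) = 0} is attained at some configuration q with K_ω(q) = 0, and any such minimizer is a central configuration: ω² ∇I(q) − 2 ∇U(q) = 0. (Equivalently, the Lagrange multiplier in −∇U(q) = λ ∇K_ω(q) equals λ = −1/(2+α).) -/

import Mathlib

/- STATEMENT 10: for α > 2 the excited energy E*(ω) is attained, and every minimizer is
a central configuration: ω² ∇I(q) − 2 ∇U(q) = 0. -/

namespace NBodyPaper

open Real

noncomputable section

abbrev E3 := EuclideanSpace ℝ (Fin 3)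

variable {N : ℕ}

/-- The α-homogeneous potential `U(x) = -∑_{i<j} m_i m_j / |x_i - x_j|^α`. -/
def pot (α : ℝ) (m : Fin N → ℝ) (q : Fin N → E3) : ℝ :=
  -∑ i : Fin N, ∑ j ∈ Finset.univ.filter (fun j => i < j), m i * m j / ‖q i - q j‖ ^ α

/-- Moment of inertia `I(x) = ∑ m_i |x_i|²`. -/
def inertia (m : Fin N → ℝ) (q : Fin N → E3) : ℝ := ∑ i, m i * ‖q i‖ ^ 2

/-- Collision-free configuration. -/
def OffDiag (q : Fin N → E3) : Prop := ∀ i j, i ≠ j → q i ≠ q j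

/-- Center of mass at the origin. -/
def comZero (m : Fin N → ℝ) (q : Fin N → E3) : Prop := ∑ i, m i • q i = 0

/-- The threshold function `K_ω(x) = ω² I(x) + α U(x)`. -/
def Kfun (α : ℝ) (m : Fin N → ℝ) (ω : ℝ) (q : Fin N → E3) : ℝ :=
  ω ^ 2 * inertia m q + α * pot α m q

/-- `E_ω(x) = (ω²/2) I(x) + U(x)`. -/
def Eomega (α : ℝ) (m : Fin N → ℝ) (ω : ℝ) (q : Fin N → E3) : ℝ :=
  ω ^ 2 / 2 * inertia m q + pot α m q

/-- The excited energy `E*(ω) = inf { E_ω(x) : K_ω(x) = 0 }`, the infimum taken over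
collision-free configurations with center of mass zero. -/
def Estar (α : ℝ) (m : Fin N → ℝ) (ω : ℝ) : ℝ :=
  sInf {e : ℝ | ∃ q : Fin N → E3, OffDiag q ∧ comZero m q ∧ Kfun α m ω q = 0 ∧ e = Eomega α m ω q}

/-- The gradient of `U` with respect to the position of the `i`-th body:
`∇_i U(q) = α ∑_{j≠i} m_i m_j (q_i − q_j)/|q_i − q_j|^{α+2}`. -/
def gradU (α : ℝ) (m : Fin N → ℝ) (q : Fin N → E3) (i : Fin N) : E3 :=
  α • ∑ j ∈ Finset.univ.erase i, (m i * m j / ‖q i - q j‖ ^ (α + 2)) • (q i - q j)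

/-- The gradient of `I` with respect to the position of the `i`-th body: `∇_i I(q) = 2 m_i q_i`. -/
def gradI (m : Fin N → ℝ) (q : Fin N → E3) (i : Fin N) : E3 := (2 * m i) • q i

/-- The amended potential `ω² I - 2 U`, whose critical points are the central configurations. -/
def amended (α : ℝ) (m : Fin N → ℝ) (ω : ℝ) (q : Fin N → E3) : ℝ :=
  ω ^ 2 * inertia m q - 2 * pot α m q

lemma inertia_smul (m : Fin N → ℝ) (s : ℝ) (q : Fin N → E3) :
    inertia m (s • q) = s ^ 2 * inertia m q := by
  simp only [inertia, Pi.smul_apply, norm_smul, mul_pow, Finset.mul_sum, Real.norm_eq_abs, sq_abs]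
  exact Finset.sum_congr rfl fun i _ => by ring

lemma pot_smul (α : ℝ) (m : Fin N → ℝ) {s : ℝ} (hs : 0 < s) (q : Fin N → E3) :
    pot α m (s • q) = s ^ (-α) * pot α m q := by
  simp only [pot, mul_neg, Finset.mul_sum]
  congr 1
  refine Finset.sum_congr rfl fun i _ => Finset.sum_congr rfl fun j _ => ?_
  rw [Pi.smul_apply, Pi.smul_apply, ← smul_sub, norm_smul, Real.norm_eq_abs, abs_of_pos hs,
    Real.mul_rpow hs.le (norm_nonneg _), Real.rpow_neg hs.le, div_mul_eq_div_div_swap,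
    div_eq_inv_mul _ (s ^ α)]

lemma OffDiag.norm_sub_pos {q : Fin N → E3} (hq : OffDiag q) {i j : Fin N} (hij : i ≠ j) :
    0 < ‖q i - q j‖ :=
  norm_pos_iff.2 (sub_ne_zero.2 (hq i j hij))

lemma OffDiag.smul {q : Fin N → E3} (hq : OffDiag q) {s : ℝ} (hs : s ≠ 0) : OffDiag (s • q) :=
  fun i j hij h => hq i j hij (smul_right_injective _ hs h)

lemma inertia_nonneg {m : Fin N → ℝ} (hm : ∀ i, 0 < m i) (q : Fin N → E3) : 0 ≤ inertia m q :=
  Finset.sum_nonneg fun i _ => mul_nonneg (hm i).le (sq_nonneg _)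

lemma inertia_pos (hN : 2 ≤ N) {m : Fin N → ℝ} (hm : ∀ i, 0 < m i) {q : Fin N → E3}
    (hq : OffDiag q) : 0 < inertia m q := by
  refine (inertia_nonneg hm q).lt_of_ne' fun h => ?_
  have h0 : ∀ i, q i = 0 := fun i => by
    have := (Finset.sum_eq_zero_iff_of_nonneg
      fun i _ => mul_nonneg (hm i).le (sq_nonneg ‖q i‖)).1 h i (Finset.mem_univ i)
    simpa [(hm i).ne'] using this
  exact hq ⟨0, by lia⟩ ⟨1, by lia⟩ (by simp) ((h0 _).trans (h0 _).symm)

lemma pairTerm_nonneg (α : ℝ) {m : Fin N → ℝ} (hm : ∀ i, 0 < m i) (q : Fin N → E3)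
    (i j : Fin N) : 0 ≤ m i * m j / ‖q i - q j‖ ^ α :=
  div_nonneg (mul_pos (hm i) (hm j)).le (Real.rpow_nonneg (norm_nonneg _) _)

lemma pairTerm_le_neg_pot (α : ℝ) {m : Fin N → ℝ} (hm : ∀ i, 0 < m i) (q : Fin N → E3)
    {i j : Fin N} (hij : i < j) : m i * m j / ‖q i - q j‖ ^ α ≤ -pot α m q := by
  rw [pot, neg_neg]
  refine le_trans ?_ (Finset.single_le_sum (fun a _ => Finset.sum_nonneg fun b _ =>
    pairTerm_nonneg α hm q a b) (Finset.mem_univ i))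
  exact Finset.single_le_sum (f := fun b => m i * m b / ‖q i - q b‖ ^ α)
    (fun b _ => pairTerm_nonneg α hm q i b) (by simpa using hij)

lemma pot_nonpos (α : ℝ) {m : Fin N → ℝ} (hm : ∀ i, 0 < m i) (q : Fin N → E3) :
    pot α m q ≤ 0 :=
  neg_nonpos.2 <| Finset.sum_nonneg fun i _ => Finset.sum_nonneg fun j _ =>
    pairTerm_nonneg α hm q i j

lemma pot_neg (hN : 2 ≤ N) (α : ℝ) {m : Fin N → ℝ} (hm : ∀ i, 0 < m i) {q : Fin N → E3}
    (hq : OffDiag q) : pot α m q < 0 := by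
  have hlt : (⟨0, by lia⟩ : Fin N) < ⟨1, by lia⟩ := by simp
  have h := pairTerm_le_neg_pot α hm q hlt
  have := div_pos (mul_pos (hm ⟨0, by lia⟩) (hm ⟨1, by lia⟩))
    (Real.rpow_pos_of_pos (hq.norm_sub_pos hlt.ne) α)
  linarith

/-- Translating the center of mass to the origin does not increase the amended potential. -/
lemma exists_comZero_amended_le (hN : 2 ≤ N) (α : ℝ) {m : Fin N → ℝ} (hm : ∀ i, 0 < m i) (ω : ℝ)
    {q : Fin N → E3} (hq : OffDiag q) :
    ∃ p, OffDiag p ∧ comZero m p ∧ amended α m ω p ≤ amended α m ω q := by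
  have hM : 0 < ∑ i, m i :=
    Finset.sum_pos (fun i _ => hm i) ⟨⟨0, by lia⟩, Finset.mem_univ _⟩
  set c : E3 := (∑ i, m i)⁻¹ • ∑ i, m i • q i with hc
  have hMc : (∑ i, m i) • c = ∑ i, m i • q i := by rw [hc, smul_inv_smul₀ hM.ne']
  refine ⟨fun i => q i - c, fun i j hij h => hq i j hij (sub_left_injective h), ?_, ?_⟩
  · simp only [comZero, smul_sub, Finset.sum_sub_distrib, ← Finset.sum_smul, hMc, sub_self]
  · have hI : inertia m (fun i => q i - c) = inertia m q - (∑ i, m i) * ‖c‖ ^ 2 := by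
      have hin : ∑ i, m i * inner ℝ (q i) c = (∑ i, m i) * ‖c‖ ^ 2 := by
        rw [← real_inner_self_eq_norm_sq, ← real_inner_smul_left, hMc, sum_inner]
        simp only [real_inner_smul_left]
      calc inertia m (fun i => q i - c)
          = inertia m q - 2 * ∑ i, m i * inner ℝ (q i) c + (∑ i, m i) * ‖c‖ ^ 2 := by
            simp only [inertia, Finset.mul_sum, Finset.sum_mul, ← Finset.sum_sub_distrib,
              ← Finset.sum_add_distrib, norm_sub_sq_real]
            exact Finset.sum_congr rfl fun i _ => by ring
        _ = _ := by rw [hin]; ring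
    have hU : pot α m (fun i => q i - c) = pot α m q := by simp [pot]
    rw [amended, amended, hI, hU]
    have : 0 ≤ ω ^ 2 * ((∑ i, m i) * ‖c‖ ^ 2) := by positivity
    linarith

lemma add_two_le_mul_sq_add_rpow {α s : ℝ} (hα : 0 < α) (hs : 0 < s) :
    α + 2 ≤ α * s ^ 2 + 2 * s ^ (-α) := by
  have h1 : s ^ 2 = Real.exp (2 * Real.log s) := by
    rw [two_mul, Real.exp_add, Real.exp_log hs, sq]
  have h2 : s ^ (-α) = Real.exp (-α * Real.log s) := by
    rw [Real.rpow_def_of_pos hs, mul_comm]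
  rw [h1, h2]
  nlinarith [Real.add_one_le_exp (2 * Real.log s), Real.add_one_le_exp (-α * Real.log s)]

/-- Along each ray, the amended potential is minimal where `K_ω` vanishes. -/
lemma exists_Kfun_eq_zero_amended_le (hN : 2 ≤ N) {α ω : ℝ} (hα : 0 < α) (hω : 0 < ω)
    {m : Fin N → ℝ} (hm : ∀ i, 0 < m i) {q : Fin N → E3} (hq : OffDiag q) (hc : comZero m q) :
    ∃ p, OffDiag p ∧ comZero m p ∧ Kfun α m ω p = 0 ∧ amended α m ω p ≤ amended α m ω q := by
  have hI := inertia_pos hN hm hq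
  have hU := neg_pos.2 (pot_neg hN α hm hq)
  have hX : 0 < α * -pot α m q / (ω ^ 2 * inertia m q) := by positivity
  set s : ℝ := (α * -pot α m q / (ω ^ 2 * inertia m q)) ^ (α + 2)⁻¹ with hs
  have hs0 : 0 < s := Real.rpow_pos_of_pos hX _
  have hK : Kfun α m ω (s • q) = 0 := by
    have h : s ^ (α + 2) = α * -pot α m q / (ω ^ 2 * inertia m q) :=
      Real.rpow_inv_rpow hX.le (by positivity)
    have h2 : s ^ (2 : ℕ) = s ^ (-α) * s ^ (α + 2) := by
      rw [← Real.rpow_add hs0, neg_add_cancel_left]; norm_cast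
    rw [Kfun, inertia_smul, pot_smul α m hs0, h2, h]
    field_simp
    ring
  refine ⟨s • q, hq.smul hs0.ne', ?_, hK, ?_⟩
  · have : ∑ i, m i • (s • q) i = s • ∑ i, m i • q i := by
      simp only [Finset.smul_sum, Pi.smul_apply, smul_comm s]
    rw [comZero, this, hc, smul_zero]
  · obtain ⟨p, hp⟩ : ∃ p, p = s • q := ⟨_, rfl⟩
    have hqp : q = s⁻¹ • p := by rw [hp, inv_smul_smul₀ hs0.ne']
    rw [← hp] at hK ⊢
    rw [hqp, amended, amended, inertia_smul, pot_smul α m (inv_pos.2 hs0)]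
    have hb := mul_le_mul_of_nonneg_right (add_two_le_mul_sq_add_rpow hα (inv_pos.2 hs0))
      (neg_nonneg.2 (pot_nonpos α hm p))
    have hI' : ω ^ 2 * inertia m p = α * -pot α m p := by rw [Kfun] at hK; linarith
    rw [mul_left_comm, hI']
    linarith

/-- The amended potential attains its minimum over the collision-free configurations. -/
lemma exists_amended_isMinOn {α ω : ℝ} (hα : 0 < α) (hω : 0 < ω)
    {m : Fin N → ℝ} (hm : ∀ i, 0 < m i) :
    ∃ q, OffDiag q ∧ ∀ p, OffDiag p → amended α m ω q ≤ amended α m ω p := by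
  have hx : ∃ x : Fin N → E3, OffDiag x := by
    refine ⟨fun i => EuclideanSpace.single 0 (i : ℝ), fun i j hij h => hij ?_⟩
    have := congrArg (fun v : E3 => v 0) h
    simpa [Fin.ext_iff] using this
  obtain ⟨x, hx⟩ := hx
  set C := amended α m ω x with hC
  set S : Set (Fin N → E3) := {q | (∀ i, ω ^ 2 * (m i * ‖q i‖ ^ 2) ≤ C) ∧
    ∀ i j, i < j → m i * m j ≤ C * ‖q i - q j‖ ^ α} with hS
  have hSoff : ∀ q ∈ S, OffDiag q := by
    have key : ∀ q ∈ S, ∀ i j, i < j → q i ≠ q j := by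
      intro q hq i j hij h
      have := hq.2 i j hij
      rw [h, sub_self, norm_zero, Real.zero_rpow hα.ne', mul_zero] at this
      exact this.not_gt (mul_pos (hm i) (hm j))
    intro q hq i j hij
    rcases hij.lt_or_gt with h | h
    · exact key q hq i j h
    · exact (key q hq j i h).symm
  have hmem : ∀ q, OffDiag q → amended α m ω q ≤ C → q ∈ S := by
    intro q hq hle
    rw [amended] at hle
    have hU := pot_nonpos α hm q
    have hI := mul_nonneg (sq_nonneg ω) (inertia_nonneg hm q)
    refine ⟨fun i => ?_, fun i j hij => ?_⟩
    · have : m i * ‖q i‖ ^ 2 ≤ inertia m q :=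
        Finset.single_le_sum (f := fun i => m i * ‖q i‖ ^ 2)
          (fun i _ => mul_nonneg (hm i).le (sq_nonneg _)) (Finset.mem_univ i)
      have := mul_le_mul_of_nonneg_left this (sq_nonneg ω)
      linarith
    · have := pairTerm_le_neg_pot α hm q hij
      rw [← div_le_iff₀ (Real.rpow_pos_of_pos (hq.norm_sub_pos hij.ne) α)]
      linarith
  have hclosed : IsClosed S := by
    simp only [hS, Set.ofPred_and, Set.ofPred_forall]
    refine (isClosed_iInter fun i => isClosed_le (by fun_prop) continuous_const).inter
      (isClosed_iInter fun i => isClosed_iInter fun j => isClosed_iInter fun _ =>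
        isClosed_le continuous_const (continuous_const.mul ?_))
    exact Continuous.rpow_const (by fun_prop) fun _ => Or.inr hα.le
  have hbdd : Bornology.IsBounded S := by
    refine (Bornology.IsBounded.pi (S := fun i => Metric.closedBall (0 : E3)
      (Real.sqrt (C / (ω ^ 2 * m i)))) fun i => Metric.isBounded_closedBall).subset ?_
    intro q hq i _
    rw [mem_closedBall_zero_iff]
    refine Real.le_sqrt_of_sq_le ?_
    rw [le_div_iff₀ (mul_pos (pow_pos hω 2) (hm i))]
    linarith [hq.1 i]
  have hcont : ContinuousOn (amended α m ω) S := by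
    unfold amended inertia pot
    refine ContinuousOn.sub (by fun_prop) (continuousOn_const.mul (ContinuousOn.neg ?_))
    refine continuousOn_finsetSum _ fun i _ => continuousOn_finsetSum _ fun j hj => ?_
    have hij : i ≠ j := (Finset.mem_filter.1 hj).2.ne
    refine continuousOn_const.div ?_ fun q hq =>
      (Real.rpow_pos_of_pos ((hSoff q hq).norm_sub_pos hij) α).ne'
    exact (Continuous.rpow_const (by fun_prop) fun _ => Or.inr hα.le).continuousOn
  obtain ⟨q, hqS, hq⟩ := (Metric.isCompact_of_isClosed_isBounded hclosed hbdd).exists_isMinOn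
    ⟨x, hmem x hx le_rfl⟩ hcont
  refine ⟨q, hSoff q hqS, fun p hp => ?_⟩
  by_cases h : amended α m ω p ≤ C
  · exact hq (hmem p hp h)
  · exact (hq (hmem x hx le_rfl)).trans (not_le.1 h).le

lemma hasDerivAt_norm_rpow_line {E : Type*} [NormedAddCommGroup E] [InnerProductSpace ℝ E]
    (β : ℝ) {d : E} (hd : d ≠ 0) (w : E) :
    HasDerivAt (fun t : ℝ => ‖d + t • w‖ ^ β) (β * ‖d‖ ^ (β - 2) * inner ℝ d w) 0 := by
  have hline : HasDerivAt (fun t : ℝ => d + t • w) w 0 := by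
    simpa using ((hasDerivAt_id (0 : ℝ)).smul_const w).const_add d
  have hd0 : 0 < ‖d‖ := norm_pos_iff.2 hd
  have h := hline.norm_sq.rpow_const (p := β / 2) (Or.inl (by simpa using hd))
  have hfun : (fun t : ℝ => (‖d + t • w‖ ^ 2) ^ (β / 2)) = fun t => ‖d + t • w‖ ^ β := by
    funext t
    rw [← Real.rpow_natCast, ← Real.rpow_mul (norm_nonneg _)]
    congr 1
    push_cast
    ring
  rw [hfun] at h
  convert h using 1
  have : ‖d‖ ^ (β - 2) = (‖d‖ ^ 2) ^ (β / 2 - 1) := by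
    rw [← Real.rpow_natCast, ← Real.rpow_mul hd0.le]
    congr 1
    push_cast
    ring
  simp only [zero_smul, add_zero, this]
  ring

lemma hasDerivAt_inertia_line (m : Fin N → ℝ) (q w : Fin N → E3) :
    HasDerivAt (fun t : ℝ => inertia m (q + t • w)) (∑ i, inner ℝ (gradI m q i) (w i)) 0 := by
  unfold inertia
  refine HasDerivAt.fun_sum fun i _ => ?_
  have hline : HasDerivAt (fun t : ℝ => (q + t • w) i) (w i) 0 := by
    simpa using ((hasDerivAt_id (0 : ℝ)).smul_const (w i)).const_add (q i)
  refine (hline.norm_sq.const_mul (m i)).congr_deriv ?_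
  simp only [gradI, zero_smul, add_zero, real_inner_smul_left]
  ring

lemma hasDerivAt_pot_line (α : ℝ) (m : Fin N → ℝ) {q : Fin N → E3} (hq : OffDiag q)
    (w : Fin N → E3) :
    HasDerivAt (fun t : ℝ => pot α m (q + t • w)) (∑ i, inner ℝ (gradU α m q i) (w i)) 0 := by
  set f : Fin N → Fin N → ℝ := fun j i =>
    α * (m i * m j / ‖q i - q j‖ ^ (α + 2)) * inner ℝ (q i - q j) (w i) with hf
  have hpair : ∀ i j, i < j → HasDerivAt
      (fun t : ℝ => m i * m j / ‖(q + t • w) i - (q + t • w) j‖ ^ α) (-(f j i + f i j)) 0 := by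
    intro i j hij
    have hd : q i - q j ≠ 0 := sub_ne_zero.2 (hq i j hij.ne)
    have h := (hasDerivAt_norm_rpow_line (-α) hd (w i - w j)).const_mul (m i * m j)
    refine (h.congr_deriv ?_).congr_of_eventuallyEq (Filter.Eventually.of_forall fun t => ?_)
    rotate_left
    · have : (q + t • w) i - (q + t • w) j = q i - q j + t • (w i - w j) := by
        simp only [Pi.add_apply, Pi.smul_apply, smul_sub]; abel
      simp only [this]
      rw [Real.rpow_neg (norm_nonneg _), div_eq_mul_inv]
    · have h1 : ‖q i - q j‖ ^ (-α - 2) = (‖q i - q j‖ ^ (α + 2))⁻¹ := by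
        rw [← Real.rpow_neg (norm_nonneg _)]; congr 1; ring
      rw [h1, hf]
      simp only
      rw [norm_sub_rev (q j) (q i), ← neg_sub (q i) (q j), inner_neg_left, inner_sub_right]
      ring
  have hsum : ∑ i, inner ℝ (gradU α m q i) (w i) =
      -∑ i, ∑ j ∈ Finset.univ.filter (fun j => i < j), -(f j i + f i j) := by
    simp only [Finset.sum_neg_distrib, neg_neg, Finset.filter_lt_eq_Ioi]
    rw [Finset.sum_sum_Ioi_add_eq_sum_sum_off_diag f]
    refine Finset.sum_congr rfl fun i _ => ?_
    rw [gradU, real_inner_smul_left, sum_inner, Finset.mul_sum, Finset.compl_singleton]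
    refine Finset.sum_congr rfl fun j _ => ?_
    rw [real_inner_smul_left, hf]
    ring
  rw [hsum]
  unfold pot
  exact (HasDerivAt.fun_sum fun i _ => HasDerivAt.fun_sum fun j hj =>
    hpair i j (Finset.mem_filter.1 hj).2).neg

lemma eventually_offDiag_line {q : Fin N → E3} (hq : OffDiag q) (w : Fin N → E3) :
    ∀ᶠ t : ℝ in nhds 0, OffDiag (q + t • w) := by
  simp only [OffDiag, Filter.eventually_all]
  intro i j hij
  have hc : ∀ k, Continuous fun t : ℝ => (q + t • w) k := fun k => by
    simp only [Pi.add_apply, Pi.smul_apply]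
    fun_prop
  exact (isOpen_ne_fun (hc i) (hc j)).mem_nhds (by simpa using hq i j hij)

/-- A minimizer of the amended potential is a central configuration. -/
lemma central_of_amended_le {α ω : ℝ} {m : Fin N → ℝ} {q : Fin N → E3} (hq : OffDiag q)
    (hmin : ∀ p, OffDiag p → amended α m ω q ≤ amended α m ω p) (i : Fin N) :
    ω ^ 2 • gradI m q i - (2 : ℝ) • gradU α m q i = 0 := by
  set w : Fin N → E3 := fun i => ω ^ 2 • gradI m q i - (2 : ℝ) • gradU α m q i with hw
  have hder := ((hasDerivAt_inertia_line m q w).const_mul (ω ^ 2)).sub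
    ((hasDerivAt_pot_line α m hq w).const_mul 2)
  have hloc : IsLocalMin (fun t : ℝ => amended α m ω (q + t • w)) 0 := by
    filter_upwards [eventually_offDiag_line hq w] with t ht
    simpa using hmin _ ht
  have h0 := hloc.hasDerivAt_eq_zero hder
  have hsum : ∑ i, ‖w i‖ ^ 2 = 0 := by
    rw [← h0, Finset.mul_sum, Finset.mul_sum, ← Finset.sum_sub_distrib]
    refine Finset.sum_congr rfl fun i _ => ?_
    rw [← real_inner_smul_left, ← real_inner_smul_left, ← inner_sub_left,
      ← real_inner_self_eq_norm_sq]
  have := (Finset.sum_eq_zero_iff_of_nonneg fun i _ => sq_nonneg ‖w i‖).1 hsum i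
    (Finset.mem_univ i)
  simpa using this

lemma amended_eq_mul_Eomega {α ω : ℝ} (hα : 2 < α) {m : Fin N → ℝ} {q : Fin N → E3}
    (hK : Kfun α m ω q = 0) :
    amended α m ω q = 2 * (α + 2) / (α - 2) * Eomega α m ω q := by
  have h2 : α - 2 ≠ 0 := by linarith
  rw [Kfun] at hK
  rw [amended, Eomega]
  field_simp
  linear_combination (-4 : ℝ) * hK

/-- **The excited energy is attained by a central configuration** (`α > 2`, `ω > 0`):
the infimum defining `E*(ω)` is attained, and any minimizer `q` satisfies
`ω² ∇I(q) − 2 ∇U(q) = 0`, i.e. it is a central configuration. -/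
theorem excited_energy_attained_central_config {N : ℕ} (hN : 2 ≤ N)
    (α ω : ℝ) (hα : 2 < α) (hω : 0 < ω) (m : Fin N → ℝ) (hm : ∀ i, 0 < m i) :
    (∃ q : Fin N → E3, OffDiag q ∧ comZero m q ∧ Kfun α m ω q = 0 ∧
      Eomega α m ω q = Estar α m ω) ∧
    (∀ q : Fin N → E3, OffDiag q → comZero m q → Kfun α m ω q = 0 →
      Eomega α m ω q = Estar α m ω →
      ∀ i, ω ^ 2 • gradI m q i - (2 : ℝ) • gradU α m q i = 0) := by
  have hα0 : 0 < α := by linarith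
  have hκ : 0 < 2 * (α + 2) / (α - 2) := div_pos (by linarith) (by linarith)
  obtain ⟨q₁, hq₁, hmin₁⟩ := exists_amended_isMinOn hα0 hω hm
  obtain ⟨q₂, hq₂, hc₂, hle₂⟩ := exists_comZero_amended_le hN α hm ω hq₁
  obtain ⟨q₀, hq₀, hc₀, hK₀, hle₀⟩ := exists_Kfun_eq_zero_amended_le hN hα0 hω hm hq₂ hc₂
  have hmin : ∀ p, OffDiag p → amended α m ω q₀ ≤ amended α m ω p := fun p hp =>
    (hle₀.trans hle₂).trans (hmin₁ p hp)
  have hE : Eomega α m ω q₀ = Estar α m ω := by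
    refine Eq.symm (IsLeast.csInf_eq (a := Eomega α m ω q₀) ⟨⟨q₀, hq₀, hc₀, hK₀, rfl⟩, ?_⟩)
    rintro _ ⟨p, hp, -, hKp, rfl⟩
    have := hmin p hp
    rw [amended_eq_mul_Eomega hα hK₀, amended_eq_mul_Eomega hα hKp] at this
    exact le_of_mul_le_mul_left this hκ
  refine ⟨⟨q₀, hq₀, hc₀, hK₀, hE⟩, fun q hq _ hK hEq => central_of_amended_le hq fun p hp => ?_⟩
  rw [amended_eq_mul_Eomega hα hK, hEq, ← hE, ← amended_eq_mul_Eomega hα hK₀]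
  exact hmin p hp

end
end NBodyPaper
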